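/- Let 0 → A →f B →g C → 0 be a short exact sequence of R-modules. Then the sequence is almost pure if and only if the following holds: for every n ∈ ℕ, every finitely generated submodule K of the free module F = Rⁿ with inclusion i : K → F, and all R-linear maps α : K → A and β : F → B with f ∘ α = β ∘ i, and for every s ∈ m, there exists an R-linear map η : F → A with η ∘ i = s·α. -/

import Mathlib

/-!
Fix `s : R`. Both sides of the equivalence say that a finite linear system over `R` with constants
in `A` that becomes solvable in `B` is solvable in `A` once its constants are multiplied by `s`.

For the tensor side, let `c` be the matrix of the system and let `M` be the cokernel of `c`, with
generators `e i`. The tensor `∑ i, e i ⊗ a i` in `M ⊗ A` vanishes exactly when `c` and `a` form a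
solvable system; conversely every tensor killed by `M ⊗ f` is governed by finitely many relations
among finitely many elements of `M`. For the lifting side, a solution is a linear map on a free
module with prescribed values on the rows of `c`, and these rows generate `K`.
-/

universe u

/-- A short exact sequence `0 → A →f B → C → 0` is almost pure if for every module `M`
the kernel of `M ⊗ A → M ⊗ B` is almost zero. -/
def IsAlmostPure {R : Type u} [CommRing R] (m : Ideal R)
    {A B : Type u} [AddCommGroup A] [Module R A] [AddCommGroup B] [Module R B]
    (f : A →ₗ[R] B) : Prop :=
  ∀ (M : Type u) [AddCommGroup M] [Module R M],
    ∀ s ∈ m, ∀ x ∈ LinearMap.ker (LinearMap.lTensor M f), s • x = 0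

open TensorProduct

section LinearSystems

variable {R N : Type*} [CommRing R] [AddCommGroup N] [Module R N]
variable {ι κ : Type*} [Fintype κ]

/-- The linear system with coefficient matrix `c` and constants `a` has a solution in `N`. -/
def IsSolvableSystem (c : Matrix ι κ R) (a : ι → N) : Prop :=
  ∃ y : κ → N, ∀ i, a i = ∑ j, c i j • y j

theorem isSolvableSystem_iff_exists_linearMap {c : Matrix ι κ R} {a : ι → N} :
    IsSolvableSystem c a ↔ ∃ η : (κ → R) →ₗ[R] N, ∀ i, a i = η (c i) := by
  classical
  constructor
  · rintro ⟨y, hy⟩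
    exact ⟨Fintype.linearCombination R y, fun i ↦ by rw [hy, Fintype.linearCombination_apply]⟩
  · rintro ⟨η, hη⟩
    refine ⟨fun j ↦ η (Pi.single j 1), fun i ↦ ?_⟩
    simp only [hη, ← map_smul, ← map_sum, ← pi_eq_sum_univ']

theorem IsSolvableSystem.of_mul {μ : Type*} [Fintype μ] {c : Matrix ι κ R} {r : Matrix κ μ R}
    {a : ι → N} (h : IsSolvableSystem (c * r) a) : IsSolvableSystem c a := by
  obtain ⟨y, hy⟩ := h
  refine ⟨fun j ↦ ∑ l, r j l • y l, fun i ↦ ?_⟩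
  simp only [hy, Matrix.mul_apply, Finset.sum_smul, Finset.smul_sum, mul_smul]
  exact Finset.sum_comm

theorem sum_tmul_eq_zero_iff_exists_isSolvableSystem [Fintype ι]
    {M : Type*} [AddCommGroup M] [Module R M] {v : ι → M}
    (hv : Submodule.span R (Set.range v) = ⊤) {a : ι → N} :
    ∑ i, v i ⊗ₜ[R] a i = 0 ↔
      ∃ (n : ℕ) (c : Matrix ι (Fin n) R), (∀ j, ∑ i, c i j • v i = 0) ∧ IsSolvableSystem c a := by
  rw [← vanishesTrivially_iff_sum_tmul_eq_zero R hv]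
  exact exists₂_congr fun n c ↦ exists_and_right.trans and_comm

/-- The cokernel of the matrix `c`, acting on column vectors: the module with generators indexed
by `ι` and the columns of `c` as relations. -/
abbrev MatrixCokernel (c : Matrix ι κ R) : Type _ :=
  (ι → R) ⧸ LinearMap.range c.mulVecLin

namespace MatrixCokernel

variable [DecidableEq ι] (c : Matrix ι κ R)

/-- The standard generators of the cokernel of a matrix: the images of the unit vectors. -/
def generator (i : ι) : MatrixCokernel c :=
  Submodule.Quotient.mk (Pi.single i 1)

theorem sum_smul_generator [Fintype ι] (w : ι → R) :
    ∑ i, w i • generator c i = Submodule.Quotient.mk w := by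
  conv_rhs => rw [pi_eq_sum_univ' w]
  simp only [generator, ← Submodule.mkQ_apply, map_sum, map_smul]

theorem span_range_generator [Finite ι] : Submodule.span R (Set.range (generator c)) = ⊤ := by
  cases nonempty_fintype ι
  refine eq_top_iff.mpr fun x _ ↦ ?_
  obtain ⟨w, rfl⟩ := Submodule.Quotient.mk_surjective _ x
  exact (Submodule.mem_span_range_iff_exists_fun R).mpr ⟨w, sum_smul_generator c w⟩

theorem sum_smul_generator_eq_zero_iff [Fintype ι] {w : ι → R} :
    ∑ i, w i • generator c i = 0 ↔ ∃ r : κ → R, c.mulVec r = w := by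
  rw [sum_smul_generator, Submodule.Quotient.mk_eq_zero, LinearMap.mem_range]
  simp only [Matrix.mulVecLin_apply]

theorem sum_col_smul_generator [Fintype ι] (j : κ) : ∑ i, c i j • generator c i = 0 := by
  classical
  exact (sum_smul_generator_eq_zero_iff c).mpr ⟨Pi.single j 1, Matrix.mulVec_single_one c j⟩

theorem sum_generator_tmul_eq_zero_iff [Fintype ι] {a : ι → N} :
    ∑ i, generator c i ⊗ₜ[R] a i = 0 ↔ IsSolvableSystem c a := by
  constructor
  · intro h
    obtain ⟨n, d, hd, hda⟩ :=
      (sum_tmul_eq_zero_iff_exists_isSolvableSystem (span_range_generator c)).mp h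
    choose r hr using fun l ↦ (sum_smul_generator_eq_zero_iff c).mp (hd l)
    have d_eq_mul : d = c * (Matrix.of r).transpose := by
      ext i l
      exact (congrFun (hr l) i).symm
    exact (d_eq_mul ▸ hda).of_mul
  · rintro ⟨y, hy⟩
    exact sum_tmul_eq_zero_of_vanishesTrivially R
      (.of_fintype c y hy (sum_col_smul_generator c))

end MatrixCokernel

end LinearSystems

section TensorProducts

variable {R M A B : Type*} [CommRing R] [AddCommGroup M] [Module R M]
variable [AddCommGroup A] [Module R A] [AddCommGroup B] [Module R B]

theorem exists_eq_sum_tmul_of_span_eq_top {ι : Type*} [Fintype ι] {v : ι → M}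
    (hv : Submodule.span R (Set.range v) = ⊤) (x : M ⊗[R] A) :
    ∃ a : ι → A, x = ∑ i, v i ⊗ₜ[R] a i := by
  induction x with
  | zero => exact ⟨0, by simp⟩
  | tmul y z =>
    have y_mem : y ∈ Submodule.span R (Set.range v) := hv ▸ Submodule.mem_top
    obtain ⟨w, rfl⟩ := (Submodule.mem_span_range_iff_exists_fun R).mp y_mem
    exact ⟨fun i ↦ w i • z, by simp [sum_tmul, smul_tmul]⟩
  | add x y hx hy =>
    obtain ⟨a, rfl⟩ := hx
    obtain ⟨b, rfl⟩ := hy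
    exact ⟨a + b, by simp [tmul_add, Finset.sum_add_distrib]⟩

theorem exists_fg_rTensor_subtype_eq_of_lTensor_eq_zero (f : A →ₗ[R] B) {x : M ⊗[R] A}
    (hx : f.lTensor M x = 0) :
    ∃ Q : Submodule R M, Q.FG ∧
      ∃ t : Q ⊗[R] A, f.lTensor Q t = 0 ∧ Q.subtype.rTensor A t = x := by
  obtain ⟨P, hP, x_mem⟩ :=
    exists_finite_submodule_left_of_setFinite {x} (Set.finite_singleton x)
  obtain ⟨t, rfl⟩ := x_mem rfl
  have image_eq_zero : P.subtype.rTensor B (f.lTensor P t) = 0 := by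
    rwa [← LinearMap.comp_apply, LinearMap.rTensor_comp_lTensor,
      ← LinearMap.lTensor_comp_rTensor]
  obtain ⟨Q, hPQ, hQ, image_eq_zero_in_Q⟩ :=
    eq_zero_of_fg_of_subtype_eq_zero (Module.Finite.iff_fg.mp hP) image_eq_zero
  refine ⟨Q, hQ, (Submodule.inclusion hPQ).rTensor A t, ?_, ?_⟩
  · rwa [← LinearMap.comp_apply, LinearMap.lTensor_comp_rTensor,
      ← LinearMap.rTensor_comp_lTensor]
  · rw [← LinearMap.comp_apply, ← LinearMap.rTensor_comp, Submodule.subtype_comp_inclusion]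

end TensorProducts

/-- Purity of `f` up to the factor `s`, in terms of equations: a finite linear system with
constants in `A` that is solvable in `B` becomes solvable in `A` after multiplying its constants
by `s`. -/
def ReflectsSolvability {R A B : Type*} [CommRing R] [AddCommGroup A] [Module R A]
    [AddCommGroup B] [Module R B] (s : R) (f : A →ₗ[R] B) : Prop :=
  ∀ (p n : ℕ) (c : Matrix (Fin p) (Fin n) R) (a : Fin p → A),
    IsSolvableSystem c (fun i ↦ f (a i)) → IsSolvableSystem c (fun i ↦ s • a i)

namespace ReflectsSolvability

section Tensor

variable {R : Type u} {A B : Type*} [CommRing R] [AddCommGroup A] [Module R A]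
variable [AddCommGroup B] [Module R B] {s : R} {f : A →ₗ[R] B}

theorem of_smul_eq_zero_of_lTensor_eq_zero
    (h : ∀ (M : Type u) [AddCommGroup M] [Module R M] (x : M ⊗[R] A),
      f.lTensor M x = 0 → s • x = 0) :
    ReflectsSolvability s f := by
  intro p n c a solvable_in_B
  rw [← MatrixCokernel.sum_generator_tmul_eq_zero_iff] at solvable_in_B ⊢
  simp only [tmul_smul, ← Finset.smul_sum]
  refine h _ _ ?_
  simpa only [map_sum, LinearMap.lTensor_tmul] using solvable_in_B

theorem smul_eq_zero_of_lTensor_eq_zero (h : ReflectsSolvability s f)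
    {M : Type*} [AddCommGroup M] [Module R M] {x : M ⊗[R] A} (hx : f.lTensor M x = 0) :
    s • x = 0 := by
  obtain ⟨Q, hQ, t, ht, rfl⟩ := exists_fg_rTensor_subtype_eq_of_lTensor_eq_zero f hx
  suffices smul_t : s • t = 0 by rw [← map_smul, smul_t, map_zero]
  have : Module.Finite R Q := Module.Finite.iff_fg.mpr hQ
  obtain ⟨p, v, hv⟩ := Module.Finite.exists_fin (R := R) (M := Q)
  obtain ⟨a, rfl⟩ := exists_eq_sum_tmul_of_span_eq_top hv t
  simp only [map_sum, LinearMap.lTensor_tmul] at ht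
  obtain ⟨n, c, relations, solvable_in_B⟩ :=
    (sum_tmul_eq_zero_iff_exists_isSolvableSystem hv).mp ht
  simp only [Finset.smul_sum, ← tmul_smul]
  exact (sum_tmul_eq_zero_iff_exists_isSolvableSystem hv).mpr
    ⟨n, c, relations, h p n c a solvable_in_B⟩

end Tensor

section Lifting

variable {R A B : Type*} [CommRing R] [AddCommGroup A] [Module R A]
variable [AddCommGroup B] [Module R B] {s : R} {f : A →ₗ[R] B}

theorem exists_comp_subtype_eq_smul (h : ReflectsSolvability s f) {n : ℕ}
    {K : Submodule R (Fin n → R)} (hK : K.FG) {α : K →ₗ[R] A} {β : (Fin n → R) →ₗ[R] B}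
    (hαβ : f ∘ₗ α = β ∘ₗ K.subtype) :
    ∃ η : (Fin n → R) →ₗ[R] A, η ∘ₗ K.subtype = s • α := by
  have : Module.Finite R K := Module.Finite.iff_fg.mpr hK
  obtain ⟨p, k, hk⟩ := Module.Finite.exists_fin (R := R) (M := K)
  have solvable_in_B : IsSolvableSystem (fun i ↦ (k i : Fin n → R)) (fun i ↦ f (α (k i))) :=
    isSolvableSystem_iff_exists_linearMap.mpr ⟨β, fun i ↦ LinearMap.congr_fun hαβ (k i)⟩
  obtain ⟨η, hη⟩ := isSolvableSystem_iff_exists_linearMap.mp (h p n _ _ solvable_in_B)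
  exact ⟨η, LinearMap.ext_on_range hk fun i ↦ (hη i).symm⟩

theorem of_exists_comp_subtype_eq_smul (hf : Function.Injective f)
    (h : ∀ (n : ℕ) (K : Submodule R (Fin n → R)), K.FG →
      ∀ (α : K →ₗ[R] A) (β : (Fin n → R) →ₗ[R] B), f ∘ₗ α = β ∘ₗ K.subtype →
        ∃ η : (Fin n → R) →ₗ[R] A, η ∘ₗ K.subtype = s • α) :
    ReflectsSolvability s f := by
  intro p n c a solvable_in_B
  obtain ⟨β, hβ⟩ := isSolvableSystem_iff_exists_linearMap.mp solvable_in_B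
  let K : Submodule R (Fin n → R) := Submodule.span R (Set.range c)
  have row_mem (i : Fin p) : c i ∈ K := Submodule.subset_span ⟨i, rfl⟩
  have K_le : K ≤ (LinearMap.range f).comap β :=
    Submodule.span_le.mpr (Set.range_subset_iff.mpr fun i ↦ ⟨a i, hβ i⟩)
  let α : K →ₗ[R] A :=
    (β ∘ₗ K.subtype).codRestrictOfInjective f hf fun z ↦ K_le z.2
  have f_comp_α : f ∘ₗ α = β ∘ₗ K.subtype := LinearMap.codRestrictOfInjective_comp _ _ _ _
  have α_row (i : Fin p) : α ⟨c i, row_mem i⟩ = a i :=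
    hf ((LinearMap.congr_fun f_comp_α _).trans (hβ i).symm)
  obtain ⟨η, hη⟩ := h n K (Submodule.fg_span (Set.finite_range c)) α β f_comp_α
  refine isSolvableSystem_iff_exists_linearMap.mpr ⟨η, fun i ↦ ?_⟩
  rw [← α_row i]
  exact (LinearMap.congr_fun hη ⟨c i, row_mem i⟩).symm

end Lifting

end ReflectsSolvability

theorem almostPure_iff_lifting_general
    {R : Type u} [CommRing R] (m : Ideal R)
    {A B : Type u} [AddCommGroup A] [Module R A] [AddCommGroup B] [Module R B]
    (f : A →ₗ[R] B) (hf : Function.Injective f) :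
    IsAlmostPure m f ↔
      (∀ (n : ℕ) (K : Submodule R (Fin n → R)), K.FG →
        ∀ (α : K →ₗ[R] A) (β : (Fin n → R) →ₗ[R] B), f ∘ₗ α = β ∘ₗ K.subtype →
          ∀ s ∈ m, ∃ η : (Fin n → R) →ₗ[R] A, η ∘ₗ K.subtype = s • α) := by
  constructor
  · intro almostPure n K hK α β hαβ s hs
    have reflects : ReflectsSolvability s f :=
      .of_smul_eq_zero_of_lTensor_eq_zero fun M _ _ x hx ↦ almostPure M s hs x hx
    exact reflects.exists_comp_subtype_eq_smul hK hαβ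
  · intro lifting M _ _ s hs x hx
    have reflects : ReflectsSolvability s f :=
      .of_exists_comp_subtype_eq_smul hf fun n K hK α β hαβ ↦ lifting n K hK α β hαβ s hs
    exact reflects.smul_eq_zero_of_lTensor_eq_zero hx

/-- Almost purity via the lifting property against inclusions of
finitely generated submodules of finite free modules. -/
theorem almostPure_iff_lifting
    {R : Type u} [CommRing R] (m : Ideal R) (hm : m * m = m)
    {A B C : Type u} [AddCommGroup A] [Module R A] [AddCommGroup B] [Module R B]
    [AddCommGroup C] [Module R C]
    (f : A →ₗ[R] B) (g : B →ₗ[R] C)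
    (hf : Function.Injective f) (hg : Function.Surjective g)
    (hfg : LinearMap.range f = LinearMap.ker g) :
    IsAlmostPure m f ↔
      (∀ (n : ℕ) (K : Submodule R (Fin n → R)), K.FG →
        ∀ (α : K →ₗ[R] A) (β : (Fin n → R) →ₗ[R] B), f ∘ₗ α = β ∘ₗ K.subtype →
          ∀ s ∈ m, ∃ η : (Fin n → R) →ₗ[R] A, η ∘ₗ K.subtype = s • α) :=
  almostPure_iff_lifting_general m f hf
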